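/- Correctness of the Move procedure: in a rooted tree, let v and q be vertices, let l be the lowest common ancestor of v and q with respect to the root r, let 0 ≤ z ≤ dist(v,q), and let w be the unique vertex lying on the path from v to q with dist(v,w) = z. If z ≤ dist(v,l), then w is the unique vertex lying on the path from v to r with dist(v,w) = z; if z > dist(v,l), then w is the unique vertex lying on the path from q to r with dist(q,w) = dist(l,q) − (z − dist(v,l)). -/

import Mathlib

/-- `m` lies on the path from `a` to `b` in the graph `G`. -/
def onPath {V : Type*} (G : SimpleGraph V) (a m b : V) : Prop :=
  G.dist a m + G.dist m b = G.dist a b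

/-- `m` is a median of the vertices `u`, `v`, `w`: it lies on the path from `u` to `v`,
on the path from `u` to `w`, and on the path from `v` to `w`. -/
def isMedian {V : Type*} (G : SimpleGraph V) (m u v w : V) : Prop :=
  onPath G u m v ∧ onPath G u m w ∧ onPath G v m w

/-- `u` is an ancestor of `v` with respect to the root `r`:
`u` lies on the path from `r` to `v`. -/
def isAncestor {V : Type*} (G : SimpleGraph V) (r u v : V) : Prop :=
  onPath G r u v

/-- `l` is a lowest common ancestor of `u` and `v` with respect to the root `r`. -/
def isLCA {V : Type*} (G : SimpleGraph V) (r l u v : V) : Prop :=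
  isAncestor G r l u ∧ isAncestor G r l v ∧
    ∀ a : V, isAncestor G r a u → isAncestor G r a v → isAncestor G r a l

/-!
In a tree the lowest common ancestor `l` of `v` and `q` is the median of `r`, `v` and `q`: the
median is a common ancestor of `v` and `q`, hence an ancestor of `l`, and this puts `l` on the
path from `v` to `q`. The paths from `v` to `q` and from `v` to `r` therefore coincide up to `l`,
and so do those from `q` to `v` and from `q` to `r`. The median of `u`, `v` and `w` is the
vertex of the path from `u` to `v` nearest to `w`, because walking from `u` to that vertex and on
to `w` never repeats a vertex.
-/

section

variable {V : Type*} {G : SimpleGraph V} {a b l m q r u v w x : V}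

theorem onPath.symm (h : onPath G a m b) : onPath G b m a := by
  simpa only [onPath, SimpleGraph.dist_comm, add_comm] using h

theorem onPath_of_mem_support {p : G.Walk a b} (hp : p.length = G.dist a b)
    (hx : x ∈ p.support) : onPath G a x b := by
  obtain ⟨p₁, p₂, rfl⟩ := SimpleGraph.Walk.mem_support_iff_exists_append.mp hx
  have h₁ : p₁.length = G.dist a x :=
    SimpleGraph.length_eq_dist_of_subwalk hp (SimpleGraph.Walk.isSubwalk_of_append_left rfl)
  have h₂ : p₂.length = G.dist x b :=
    SimpleGraph.length_eq_dist_of_subwalk hp (SimpleGraph.Walk.isSubwalk_of_append_right rfl)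
  rw [onPath, ← h₁, ← h₂, ← SimpleGraph.Walk.length_append, hp]

theorem isPath_append {p : G.Walk a m} {q : G.Walk m b} (hp : p.IsPath) (hq : q.IsPath)
    (hpq : ∀ x ∈ p.support, x ∈ q.support → x = m) : (p.append q).IsPath := by
  have hq' : (m :: q.support.tail).Nodup := q.cons_tail_support.symm ▸ hq.support_nodup
  rw [SimpleGraph.Walk.isPath_def, SimpleGraph.Walk.support_append]
  refine hp.support_nodup.append hq'.of_cons fun x hxp hxq ↦ ?_
  obtain rfl : x = m := hpq x hxp (List.mem_of_mem_tail hxq)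
  exact hq'.notMem hxq

theorem onPath.trans_left (h : onPath G a m b) (hG : G.Connected) (hx : onPath G a x m) :
    onPath G a x b := by
  have h₁ := hG.dist_triangle (u := a) (v := x) (w := b)
  have h₂ := hG.dist_triangle (u := x) (v := m) (w := b)
  unfold onPath at *
  omega

theorem onPath.trans_left_right (h : onPath G a m b) (hG : G.Connected) (hx : onPath G a x m) :
    onPath G x m b := by
  have h₁ := hG.dist_triangle (u := a) (v := x) (w := b)
  have h₂ := hG.dist_triangle (u := x) (v := m) (w := b)
  unfold onPath at *
  omega

theorem exists_onPath_dist_eq (hG : G.Connected) {n : ℕ} (hn : n ≤ G.dist a b) :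
    ∃ x, onPath G a x b ∧ G.dist a x = n := by
  obtain ⟨p, hp⟩ := hG.exists_walk_length_eq_dist a b
  refine ⟨p.getVert n, onPath_of_mem_support hp (p.getVert_mem_support n), ?_⟩
  have htake : (p.take n).length = G.dist a (p.getVert n) :=
    SimpleGraph.length_eq_dist_of_subwalk hp (p.isSubwalk_take n)
  rw [← htake, SimpleGraph.Walk.take_length, hp, min_eq_left hn]

theorem length_eq_dist_of_isPath (hG : G.IsAcyclic) {p : G.Walk a b} (hp : p.IsPath) :
    p.length = G.dist a b := by
  obtain ⟨p', hp', hlength⟩ := p.reachable.exists_path_of_dist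
  have hpp' : p = p' :=
    congrArg Subtype.val ((hG.subsingleton_path a b).elim ⟨p, hp⟩ ⟨p', hp'⟩)
  rw [hpp', hlength]

theorem getVert_dist_of_onPath (hG : G.IsTree) {p : G.Walk a b} (hp : p.IsPath)
    (hm : onPath G a m b) : p.getVert (G.dist a m) = m := by
  obtain ⟨p₁, hp₁⟩ := hG.connected.exists_walk_length_eq_dist a m
  obtain ⟨p₂, hp₂⟩ := hG.connected.exists_walk_length_eq_dist m b
  have happend : (p₁.append p₂).IsPath :=
    SimpleGraph.Walk.isPath_of_length_eq_dist _ <| by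
      rw [SimpleGraph.Walk.length_append, hp₁, hp₂, hm]
  rw [(hG.existsUnique_path a b).unique hp happend, ← hp₁, SimpleGraph.Walk.getVert_append',
    if_pos le_rfl, SimpleGraph.Walk.getVert_length]

theorem onPath.eq_of_dist_eq (hm : onPath G a m b) (hG : G.IsTree) (hx : onPath G a x b)
    (h : G.dist a m = G.dist a x) : m = x := by
  obtain ⟨p, hp, -⟩ := hG.existsUnique_path a b
  rw [← getVert_dist_of_onPath hG hp hm, h, getVert_dist_of_onPath hG hp hx]

theorem onPath.left_of_dist_le (hx : onPath G a x b) (hG : G.IsTree) (hm : onPath G a m b)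
    (h : G.dist a x ≤ G.dist a m) : onPath G a x m := by
  obtain ⟨y, hym, hy⟩ := exists_onPath_dist_eq hG.connected h
  obtain rfl : y = x := (hm.trans_left hG.connected hym).eq_of_dist_eq hG hx hy
  exact hym

theorem onPath_of_forall_dist_le (hG : G.IsTree) (hm : onPath G u m v)
    (hmin : ∀ x, onPath G u x v → G.dist m w ≤ G.dist x w) : onPath G u m w := by
  obtain ⟨p, hp, hp_length⟩ := hG.connected.exists_path_of_dist u m
  obtain ⟨q, hq, hq_length⟩ := hG.connected.exists_path_of_dist m w
  have hpq : ∀ x ∈ p.support, x ∈ q.support → x = m := by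
    intro x hxp hxq
    have hle : G.dist m w ≤ G.dist x w :=
      hmin x (hm.trans_left hG.connected (onPath_of_mem_support hp_length hxp))
    have hadd : G.dist m x + G.dist x w = G.dist m w := onPath_of_mem_support hq_length hxq
    exact (hG.connected.dist_eq_zero_iff.mp (by omega : G.dist m x = 0)).symm
  rw [onPath, ← hp_length, ← hq_length, ← SimpleGraph.Walk.length_append]
  exact length_eq_dist_of_isPath hG.isAcyclic (isPath_append hp hq hpq)

theorem exists_isMedian (hG : G.IsTree) (u v w : V) : ∃ m, isMedian G m u v w := by
  obtain ⟨m, hm, hmin⟩ := exists_minimalFor_of_wellFoundedLT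
    (onPath G u · v) (G.dist · w) ⟨u, by simp [onPath]⟩
  have hle : ∀ x, onPath G u x v → G.dist m w ≤ G.dist x w :=
    fun x hx ↦ (le_total _ _).elim id (hmin hx)
  exact ⟨m, hm, onPath_of_forall_dist_le hG hm hle,
    onPath_of_forall_dist_le hG hm.symm fun x hx ↦ hle x hx.symm⟩

theorem isLCA.isMedian (hl : isLCA G r l v q) (hG : G.IsTree) : isMedian G l r v q := by
  obtain ⟨hlv, hlq, hlowest⟩ := hl
  obtain ⟨m, hmv, hmq, hvmq⟩ := exists_isMedian hG r v q
  have hvlm : onPath G v l m :=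
    (onPath.trans_left_right hlv hG.connected (hlowest m hmv hmq)).symm
  exact ⟨hlv, hlq, hvmq.trans_left hG.connected hvlm⟩

theorem move_correct_general (hG : G.IsTree) (hl : isLCA G r l v q) {z : ℕ}
    (hw : onPath G v w q ∧ G.dist v w = z) :
    (z ≤ G.dist v l →
      (onPath G v w r ∧ G.dist v w = z) ∧
      ∀ w' : V, onPath G v w' r → G.dist v w' = z → w' = w) ∧
    (G.dist v l < z →
      (onPath G q w r ∧ G.dist q w = G.dist l q - (z - G.dist v l)) ∧
      ∀ w' : V, onPath G q w' r →
        G.dist q w' = G.dist l q - (z - G.dist v l) → w' = w) := by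
  obtain ⟨hrv, hrq, hvq⟩ := hl.isMedian hG
  obtain ⟨hw, rfl⟩ := hw
  refine ⟨fun hle ↦ ?_, fun hlt ↦ ?_⟩
  · have hwr : onPath G v w r :=
      hrv.symm.trans_left hG.connected (hw.left_of_dist_le hG hvq hle)
    exact ⟨⟨hwr, rfl⟩, fun w' hw' hdist ↦ hw'.eq_of_dist_eq hG hwr hdist⟩
  · have hqw : G.dist q w = G.dist l q - (G.dist v w - G.dist v l) := by
      rw [SimpleGraph.dist_comm (u := q)]
      unfold onPath at hw hvq
      omega
    have hle : G.dist q w ≤ G.dist q l := by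
      rw [hqw, SimpleGraph.dist_comm (u := q)]
      exact Nat.sub_le _ _
    have hwr : onPath G q w r :=
      hrq.symm.trans_left hG.connected (hw.symm.left_of_dist_le hG hvq.symm hle)
    exact ⟨⟨hwr, hqw⟩, fun w' hw' hdist ↦ hw'.eq_of_dist_eq hG hwr (hdist.trans hqw.symm)⟩

end

/-- Correctness of the `Move` procedure: with `l` the LCA of `v` and `q`,
`0 ≤ z ≤ dist(v,q)`, and `w` the unique vertex on the path from `v` to `q` with
`dist(v,w) = z`: if `z ≤ dist(v,l)` then `w` is the unique vertex on the path
from `v` to `r` at distance `z` from `v`; if `z > dist(v,l)` then `w` is the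
unique vertex on the path from `q` to `r` at distance
`dist(l,q) − (z − dist(v,l))` from `q`. -/
theorem move_correct {V : Type*} [Fintype V] (G : SimpleGraph V)
    (hG : G.IsTree) (r v q l : V) (hl : isLCA G r l v q)
    (z : ℕ) (hz : z ≤ G.dist v q)
    (w : V) (hw : onPath G v w q ∧ G.dist v w = z) :
    (z ≤ G.dist v l →
      (onPath G v w r ∧ G.dist v w = z) ∧
      ∀ w' : V, onPath G v w' r → G.dist v w' = z → w' = w) ∧
    (G.dist v l < z →
      (onPath G q w r ∧ G.dist q w = G.dist l q - (z - G.dist v l)) ∧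
      ∀ w' : V, onPath G q w' r →
        G.dist q w' = G.dist l q - (z - G.dist v l) → w' = w) :=
  move_correct_general hG hl hw
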